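/- Let A be an AWA, w ∈ Σ^ω, Φ_w = (Q₁⁰,d₀)(Q₁¹,d₁)⋯ the unique consistent sequence of distance functions for R_w, and P_w = (Q₁⁰,{⪯⁰_C}_{C∈S})(Q₁¹,{⪯¹_C}_{C∈S})⋯ any consistent sequence of total preorders for R_w. Then for every i ∈ ℕ: (i) for every rejecting SCC C ⊆ R and all q, q' ∈ C∩Q₁ⁱ: if q ⪯ⁱ_C q' then d_i(q) ≤ d_i(q'), and if q ≺ⁱ_C q' then d_i(q) < d_i(q'); (ii) for every accepting SCC C ⊆ Acc and all q, q' ∈ C∖Q₁ⁱ: if q ⪯ⁱ_C q' then d_i(q) ≤ d_i(q'), and if q ≺ⁱ_C q' then d_i(q) < d_i(q'). -/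

import Mathlib

/-!
In a fixed SCC, the rules for distances say that `d i p - 1` is the least `k` such that the states
usable outside the SCC, together with the states of the SCC at level `i + 1` of distance at most
`k`, satisfy the transition formula of `p`. By strong induction on `n`, simultaneously for all
levels, `q ≺ q'` is equivalent to `d i q < d i q'` whenever the smaller of the two distances is
`n`. The reason is that, by the induction hypothesis, a set `{r' | d (i + 1) r' ≤ n - 1}` that
misses some state of the domain is a strict initial segment `{r' | r' ≺ r}` of the preorder, so
the two kinds of rules evaluate the transition formulas on the same sets. `strict_iff_dist_lt`
carries this argument; rejecting SCCs and (via the dual transition function) accepting SCCs are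
both instances of it.
-/

universe u v

/-- Positive Boolean formulas over `Q` (with constants tt and ff, connectives ∧ and ∨). -/
inductive PosBool (Q : Type u) : Type u
  | tt : PosBool Q
  | ff : PosBool Q
  | var : Q → PosBool Q
  | band : PosBool Q → PosBool Q → PosBool Q
  | bor : PosBool Q → PosBool Q → PosBool Q

namespace PosBool

variable {Q : Type u}

/-- A set `Y` satisfies a positive Boolean formula. -/
def Sat (Y : Set Q) : PosBool Q → Prop
  | .tt => True
  | .ff => False
  | .var q => q ∈ Y
  | .band θ₁ θ₂ => Sat Y θ₁ ∧ Sat Y θ₂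
  | .bor θ₁ θ₂ => Sat Y θ₁ ∨ Sat Y θ₂

/-- The states occurring in a formula. -/
def vars : PosBool Q → Set Q
  | .tt => ∅
  | .ff => ∅
  | .var q => {q}
  | .band θ₁ θ₂ => vars θ₁ ∪ vars θ₂
  | .bor θ₁ θ₂ => vars θ₁ ∪ vars θ₂

/-- The dual formula: exchange tt with ff and ∧ with ∨. -/
def dual : PosBool Q → PosBool Q
  | .tt => .ff
  | .ff => .tt
  | .var q => .var q
  | .band θ₁ θ₂ => .bor (dual θ₁) (dual θ₂)
  | .bor θ₁ θ₂ => .band (dual θ₁) (dual θ₂)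

end PosBool

/-- An alternating Büchi automaton with alphabet `α` and state space `Q`. -/
structure ABA (α : Type v) (Q : Type u) where
  init : Q
  delta : Q → α → PosBool Q
  acc : Set Q

namespace ABA

variable {α : Type v} {Q : Type u}

/-- The automaton `A^q`, i.e. `A` with initial state `q`. -/
def setInit (M : ABA α Q) (q : Q) : ABA α Q := { M with init := q }

/-- Completeness: every transition formula is satisfiable. -/
def Complete (M : ABA α Q) : Prop := ∀ q a, PosBool.Sat (Set.univ : Set Q) (M.delta q a)

/-- Edge of the underlying graph. -/
def edge (M : ABA α Q) (q q' : Q) : Prop := ∃ a, q' ∈ PosBool.vars (M.delta q a)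

/-- Reachability in the underlying graph. -/
def reach (M : ABA α Q) : Q → Q → Prop := Relation.ReflTransGen M.edge

/-- The strongly connected component of a state. -/
def sccOf (M : ABA α Q) (q : Q) : Set Q := {q' | M.reach q q' ∧ M.reach q' q}

/-- `C` is an SCC of the underlying graph. -/
def IsSCC (M : ABA α Q) (C : Set Q) : Prop := ∃ q, C = M.sccOf q

/-- A weak alternating automaton: every SCC is accepting or rejecting. -/
def IsWeak (M : ABA α Q) : Prop := ∀ q : Q, M.sccOf q ⊆ M.acc ∨ M.sccOf q ∩ M.acc = ∅

/-- The dual automaton. -/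
def dual (M : ABA α Q) : ABA α Q where
  init := M.init
  delta := fun q a => (M.delta q a).dual
  acc := M.accᶜ

/-- A run DAG of `M` over the ω-word `w`. -/
structure RunDAG (M : ABA α Q) (w : ℕ → α) where
  V : ℕ → Set Q
  E : ℕ → Q → Q → Prop
  init_mem : M.init ∈ V 0
  edge_src : ∀ ℓ q q', E ℓ q q' → q ∈ V ℓ
  edge_tgt : ∀ ℓ q q', E ℓ q q' → q' ∈ V (ℓ + 1)
  sat : ∀ ℓ q, q ∈ V ℓ → PosBool.Sat {q' | E ℓ q q'} (M.delta q (w ℓ))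

/-- An ω-branch of a run DAG. -/
def RunDAG.IsBranch {M : ABA α Q} {w : ℕ → α} (G : M.RunDAG w) (b : ℕ → Q) : Prop :=
  b 0 = M.init ∧ ∀ ℓ, G.E ℓ (b ℓ) (b (ℓ + 1))

/-- A run DAG is accepting if every ω-branch visits accepting states infinitely often. -/
def RunDAG.Accepting {M : ABA α Q} {w : ℕ → α} (G : M.RunDAG w) : Prop :=
  ∀ b, G.IsBranch b → ∀ n, ∃ m, n ≤ m ∧ b m ∈ M.acc

/-- `M` accepts `w` if there is an accepting run DAG of `M` over `w`. -/
def Accepts (M : ABA α Q) (w : ℕ → α) : Prop := ∃ G : M.RunDAG w, G.Accepting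

/-- The language of `M`. -/
def lang (M : ABA α Q) : Set (ℕ → α) := {w | M.Accepts w}

/-- `R`: the union of the rejecting SCCs. -/
def RejPart (M : ABA α Q) : Set Q := {q | M.sccOf q ∩ M.acc = ∅}

/-- `Acc`: the union of the accepting SCCs. -/
def AccPart (M : ABA α Q) : Set Q := {q | M.sccOf q ⊆ M.acc}

end ABA

/-- The suffix `w[i⋯]` of an ω-word. -/
def suffix {α : Type v} (w : ℕ → α) (i : ℕ) : ℕ → α := fun n => w (i + n)

/-- `Q_w = {s ∈ Q | w ∈ L(A^s)}`. -/
def QSet {α : Type v} {Q : Type u} (M : ABA α Q) (w : ℕ → α) : Set Q :=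
  {s | w ∈ (M.setInit s).lang}

/-- The unique sequence `R_w`, i.e. `i ↦ Q_{w[i⋯]}`. -/
def QSeq {α : Type v} {Q : Type u} (M : ABA α Q) (w : ℕ → α) (i : ℕ) : Set Q :=
  QSet M (suffix w i)

/-- A nondeterministic Büchi automaton. -/
structure NBA (α : Type v) (P : Type u) where
  init : Set P
  delta : P → α → Set P
  acc : Set P

namespace NBA

variable {α : Type v} {P : Type u}

/-- A macrorun of `N` over `w`. -/
def IsMacrorun (N : NBA α P) (w : ℕ → α) (ρ : ℕ → P) : Prop :=
  ρ 0 ∈ N.init ∧ ∀ i, ρ (i + 1) ∈ N.delta (ρ i) (w i)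

/-- An accepting macrorun of `N` over `w`. -/
def IsAccMacrorun (N : NBA α P) (w : ℕ → α) (ρ : ℕ → P) : Prop :=
  N.IsMacrorun w ρ ∧ ∀ n, ∃ m, n ≤ m ∧ ρ m ∈ N.acc

/-- The language of an NBA. -/
def lang (N : NBA α P) : Set (ℕ → α) := {w | ∃ ρ, N.IsAccMacrorun w ρ}

/-- `N^m`: the NBA `N` with set of initial states `{m}`. -/
def fromState (N : NBA α P) (p : P) : NBA α P := { N with init := {p} }

/-- An NBA is unambiguous if it has at most one accepting macrorun over every word. -/
def Unambiguous (N : NBA α P) : Prop :=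
  ∀ w ρ₁ ρ₂, N.IsAccMacrorun w ρ₁ → N.IsAccMacrorun w ρ₂ → ρ₁ = ρ₂

end NBA

/-- Macrostates of the Bustan–Rubin–Vardi construction: tuples `(Q₁, Q₂, Q₃, Q₄)`. -/
abbrev BRVState (Q : Type u) := Set Q × Set Q × Set Q × Set Q

/-- Consistency of a BRV tuple: `Q₂ = Q∖Q₁`, `Q₃ ⊆ Q₁∖F`, `Q₄ ⊆ Q₂∖F̂`. -/
def BRVConsistent {α : Type v} {Q : Type u} (M : ABA α Q) (m : BRVState Q) : Prop :=
  m.2.1 = m.1ᶜ ∧ m.2.2.1 ⊆ m.1 \ M.acc ∧ m.2.2.2 ⊆ m.2.1 \ M.dual.acc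

/-- The Bustan–Rubin–Vardi NBA `B` constructed from an AWA. -/
def BRV {α : Type v} {Q : Type u} (M : ABA α Q) : NBA α (BRVState Q) where
  init := {m | BRVConsistent M m ∧ M.init ∈ m.1}
  delta := fun m σ =>
    {m' | BRVConsistent M m ∧ BRVConsistent M m' ∧
      (∀ s ∈ m.1, PosBool.Sat m'.1 (M.delta s σ)) ∧
      (∀ s ∈ m.2.1, PosBool.Sat m'.2.1 (M.dual.delta s σ)) ∧
      ((m.2.2.1 = ∅ ∧ m.2.2.2 = ∅ ∧ m'.2.2.1 = m'.1 \ M.acc ∧ m'.2.2.2 = m'.2.1 \ M.dual.acc) ∨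
       ((m.2.2.1 ≠ ∅ ∨ m.2.2.2 ≠ ∅) ∧
        (∃ Y₃ ⊆ m'.1, (∀ s ∈ m.2.2.1, PosBool.Sat Y₃ (M.delta s σ)) ∧ m'.2.2.1 = Y₃ \ M.acc) ∧
        (∃ Y₄ ⊆ m'.2.1, (∀ s ∈ m.2.2.2, PosBool.Sat Y₄ (M.dual.delta s σ)) ∧
          m'.2.2.2 = Y₄ \ M.dual.acc)))}
  acc := {m | BRVConsistent M m ∧ m.2.2.1 = ∅ ∧ m.2.2.2 = ∅}

/-- The domain of the distance function at level `i`: `(Q₁ⁱ ∩ R) ∪ (Acc ∖ Q₁ⁱ)`. -/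
def DistDom {α : Type v} {Q : Type u} (M : ABA α Q) (QS : ℕ → Set Q) (i : ℕ) : Set Q :=
  (QS i ∩ M.RejPart) ∪ (M.AccPart \ QS i)

/-- Consistency of a sequence of distance functions (Rules R1 and R2). -/
def ConsistentDist {α : Type v} {Q : Type u} (M : ABA α Q) (w : ℕ → α)
    (QS : ℕ → Set Q) (d : ℕ → Q → ℕ) : Prop :=
  ∀ i : ℕ,
    (∀ p ∈ M.RejPart ∩ QS i,
      PosBool.Sat ((QS (i + 1) \ M.sccOf p) ∪
        {q | q ∈ M.sccOf p ∩ QS (i + 1) ∧ d (i + 1) q ≤ d i p - 1}) (M.delta p (w i)) ∧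
      (1 < d i p →
        ¬ PosBool.Sat ((QS (i + 1) \ M.sccOf p) ∪
          {q | q ∈ M.sccOf p ∩ QS (i + 1) ∧ d (i + 1) q ≤ d i p - 2}) (M.delta p (w i)))) ∧
    (∀ p ∈ M.AccPart \ QS i,
      PosBool.Sat ((QS (i + 1) ∪ M.sccOf p)ᶜ ∪
        {q | q ∈ M.sccOf p \ QS (i + 1) ∧ d (i + 1) q ≤ d i p - 1}) (M.dual.delta p (w i)) ∧
      (1 < d i p →
        ¬ PosBool.Sat ((QS (i + 1) ∪ M.sccOf p)ᶜ ∪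
          {q | q ∈ M.sccOf p \ QS (i + 1) ∧ d (i + 1) q ≤ d i p - 2}) (M.dual.delta p (w i))))

/-- Strict part of a preorder. -/
def StrictOf {Q : Type u} (le : Q → Q → Prop) (p q : Q) : Prop := le p q ∧ ¬ le q p

/-- `le` is a total preorder on `D` (as a relation over `D × D`). -/
def IsTotalPreorderOn {Q : Type u} (D : Set Q) (le : Q → Q → Prop) : Prop :=
  (∀ p q, le p q → p ∈ D ∧ q ∈ D) ∧ (∀ p ∈ D, le p p) ∧
  (∀ p q r, le p q → le q r → le p r) ∧ (∀ p ∈ D, ∀ q ∈ D, le p q ∨ le q p)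

/-- `D` is downwards closed w.r.t. `le` inside the domain `Dom`. -/
def DownClosed {Q : Type u} (le : Q → Q → Prop) (Dom D : Set Q) : Prop :=
  D ⊆ Dom ∧ ∀ q ∈ D, ∀ q', le q' q → q' ∈ D

/-- The set of maximal elements of a preorder on the domain `Dom`. -/
def MaxSet {Q : Type u} (le : Q → Q → Prop) (Dom : Set Q) : Set Q :=
  {q | q ∈ Dom ∧ ∀ q' ∈ Dom, ¬ StrictOf le q q'}

/-- Rule R1' for a rejecting SCC `C`, letter `σ`, sets `Q₁, Q₁'` and preorders `le, le'`. -/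
def RuleR1 {α : Type v} {Q : Type u} (M : ABA α Q) (C : Set Q) (σ : α)
    (Q1 Q1' : Set Q) (le le' : Q → Q → Prop) : Prop :=
  ∀ q ∈ C ∩ Q1, ∀ q' ∈ C ∩ Q1,
    (StrictOf le q q' ↔ ∃ r ∈ C ∩ Q1',
      PosBool.Sat ({r' | r' ∈ C ∩ Q1' ∧ StrictOf le' r' r} ∪ (Q1' \ C)) (M.delta q σ) ∧
      ¬ PosBool.Sat ({r' | r' ∈ C ∩ Q1' ∧ StrictOf le' r' r} ∪ (Q1' \ C)) (M.delta q' σ))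

/-- Rule R2' for an accepting SCC `C`, letter `σ`, sets `Q₁, Q₁'` and preorders `le, le'`. -/
def RuleR2 {α : Type v} {Q : Type u} (M : ABA α Q) (C : Set Q) (σ : α)
    (Q1 Q1' : Set Q) (le le' : Q → Q → Prop) : Prop :=
  ∀ q ∈ C \ Q1, ∀ q' ∈ C \ Q1,
    (StrictOf le q q' ↔ ∃ r ∈ C \ Q1',
      PosBool.Sat ({r' | r' ∈ C \ Q1' ∧ StrictOf le' r' r} ∪ (Q1' ∪ C)ᶜ) (M.dual.delta q σ) ∧
      ¬ PosBool.Sat ({r' | r' ∈ C \ Q1' ∧ StrictOf le' r' r} ∪ (Q1' ∪ C)ᶜ) (M.dual.delta q' σ))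

/-- Consistency of a sequence of families of total preorders (Rules R1' and R2'). -/
def ConsistentPre {α : Type v} {Q : Type u} (M : ABA α Q) (w : ℕ → α)
    (QS : ℕ → Set Q) (pre : ℕ → Set Q → Q → Q → Prop) : Prop :=
  ∀ i C, M.IsSCC C →
    (C ⊆ M.RejPart →
      IsTotalPreorderOn (C ∩ QS i) (pre i C) ∧
      RuleR1 M C (w i) (QS i) (QS (i + 1)) (pre i C) (pre (i + 1) C)) ∧
    (C ⊆ M.AccPart →
      IsTotalPreorderOn (C \ QS i) (pre i C) ∧
      RuleR2 M C (w i) (QS i) (QS (i + 1)) (pre i C) (pre (i + 1) C))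

/-- Macrostates of the `B_u` construction: `(Q₁, Q₂, {⪯_C}_{C∈S}, S, D)`. -/
abbrev BuState (Q : Type u) := Set Q × Set Q × (Set Q → Q → Q → Prop) × Set Q × Set Q

def BuState.q1 {Q : Type u} (m : BuState Q) : Set Q := m.1
def BuState.q2 {Q : Type u} (m : BuState Q) : Set Q := m.2.1
def BuState.pre {Q : Type u} (m : BuState Q) : Set Q → Q → Q → Prop := m.2.2.1
def BuState.sS {Q : Type u} (m : BuState Q) : Set Q := m.2.2.2.1
def BuState.dD {Q : Type u} (m : BuState Q) : Set Q := m.2.2.2.2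

/-- Well-formedness of a `B_u` macrostate. -/
def BuWF {α : Type v} {Q : Type u} (M : ABA α Q) (m : BuState Q) : Prop :=
  m.q2 = m.q1ᶜ ∧
  (∀ C, M.IsSCC C →
    (C ⊆ M.RejPart → IsTotalPreorderOn (m.q1 ∩ C) (m.pre C)) ∧
    (C ⊆ M.AccPart → IsTotalPreorderOn (m.q2 ∩ C) (m.pre C))) ∧
  (∀ C, ¬ M.IsSCC C → m.pre C = fun _ _ => False) ∧
  M.IsSCC m.sS ∧
  (m.sS ⊆ M.RejPart → DownClosed (m.pre m.sS) (m.q1 ∩ m.sS) m.dD) ∧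
  (m.sS ⊆ M.AccPart → DownClosed (m.pre m.sS) (m.q2 ∩ m.sS) m.dD)

/-- The NBA `B_u` constructed from an AWA `M`, a round-robin successor `next` on SCCs
and an initial SCC `C₀`. -/
def Bu {α : Type v} {Q : Type u} (M : ABA α Q) (next : Set Q → Set Q) (C0 : Set Q) :
    NBA α (BuState Q) where
  init := {m | BuWF M m ∧ M.init ∈ m.q1 ∧ m.sS = C0 ∧ m.dD = ∅}
  delta := fun m σ =>
    {m' | BuWF M m ∧ BuWF M m' ∧
      (∀ s ∈ m.q1, PosBool.Sat m'.q1 (M.delta s σ)) ∧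
      (∀ s ∈ m.q2, PosBool.Sat m'.q2 (M.dual.delta s σ)) ∧
      (∀ C, M.IsSCC C →
        (C ⊆ M.RejPart → RuleR1 M C σ m.q1 m'.q1 (m.pre C) (m'.pre C)) ∧
        (C ⊆ M.AccPart → RuleR2 M C σ m.q1 m'.q1 (m.pre C) (m'.pre C))) ∧
      (m.dD = ∅ → m'.sS = next m.sS ∧
        (m'.sS ⊆ M.RejPart → m'.dD = m'.q1 ∩ m'.sS) ∧
        (m'.sS ⊆ M.AccPart → m'.dD = m'.q2 ∩ m'.sS)) ∧
      (m.dD ≠ ∅ → m'.sS = m.sS ∧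
        (m.sS ⊆ M.RejPart →
          (∀ s ∈ m.dD, PosBool.Sat (m'.dD ∪ (m'.q1 \ m.sS)) (M.delta s σ)) ∧
          (∀ D'', DownClosed (m'.pre m.sS) (m'.q1 ∩ m.sS) D'' →
            (∀ s ∈ m.dD, PosBool.Sat (D'' ∪ (m'.q1 \ m.sS)) (M.delta s σ)) → m'.dD ⊆ D'')) ∧
        (m.sS ⊆ M.AccPart →
          (∀ s ∈ m.dD, PosBool.Sat (m'.dD ∪ (m'.q2 \ m.sS)) (M.dual.delta s σ)) ∧
          (∀ D'', DownClosed (m'.pre m.sS) (m'.q2 ∩ m.sS) D'' →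
            (∀ s ∈ m.dD, PosBool.Sat (D'' ∪ (m'.q2 \ m.sS)) (M.dual.delta s σ)) → m'.dD ⊆ D'')))}
  acc := {m | BuWF M m ∧ m.dD = ∅}

/-- Macrostates of the `U` construction: `(Q₁, Q₂, ⪯_C, C, D)`. -/
abbrev UState (Q : Type u) := Set Q × Set Q × (Q → Q → Prop) × Set Q × Set Q

def UState.q1 {Q : Type u} (m : UState Q) : Set Q := m.1
def UState.q2 {Q : Type u} (m : UState Q) : Set Q := m.2.1
def UState.pre {Q : Type u} (m : UState Q) : Q → Q → Prop := m.2.2.1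
def UState.cC {Q : Type u} (m : UState Q) : Set Q := m.2.2.2.1
def UState.dD {Q : Type u} (m : UState Q) : Set Q := m.2.2.2.2

/-- Well-formedness of a `U` macrostate. -/
def UWF {α : Type v} {Q : Type u} (M : ABA α Q) (m : UState Q) : Prop :=
  m.q2 = m.q1ᶜ ∧ M.IsSCC m.cC ∧
  (m.cC ⊆ M.RejPart →
    IsTotalPreorderOn (m.q1 ∩ m.cC) m.pre ∧
    (m.dD = m.q1 ∩ m.cC ∨ m.dD = (m.q1 ∩ m.cC) \ MaxSet m.pre (m.q1 ∩ m.cC))) ∧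
  (m.cC ⊆ M.AccPart →
    IsTotalPreorderOn (m.q2 ∩ m.cC) m.pre ∧
    (m.dD = m.q2 ∩ m.cC ∨ m.dD = (m.q2 ∩ m.cC) \ MaxSet m.pre (m.q2 ∩ m.cC)))

/-- The NBA `U` constructed from an AWA `M`, a round-robin successor `next` on SCCs
and an initial SCC `C₀`. -/
def Uaut {α : Type v} {Q : Type u} (M : ABA α Q) (next : Set Q → Set Q) (C0 : Set Q) :
    NBA α (UState Q) where
  init := {m | UWF M m ∧ M.init ∈ m.q1 ∧ m.cC = C0 ∧ m.dD = ∅}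
  delta := fun m σ =>
    {m' | UWF M m ∧ UWF M m' ∧
      (∀ s ∈ m.q1, PosBool.Sat m'.q1 (M.delta s σ)) ∧
      (∀ s ∈ m.q2, PosBool.Sat m'.q2 (M.dual.delta s σ)) ∧
      (m.dD = ∅ → m'.cC = next m.cC ∧
        (m'.cC ⊆ M.RejPart → m'.dD = m'.q1 ∩ m'.cC) ∧
        (m'.cC ⊆ M.AccPart → m'.dD = m'.q2 ∩ m'.cC)) ∧
      (m.dD ≠ ∅ → m'.cC = m.cC ∧
        (m.cC ⊆ M.RejPart →
          RuleR1 M m.cC σ m.q1 m'.q1 m.pre m'.pre ∧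
          DownClosed m'.pre (m'.q1 ∩ m.cC) m'.dD ∧
          (∀ s ∈ m.dD, PosBool.Sat (m'.dD ∪ (m'.q1 \ m.cC)) (M.delta s σ)) ∧
          (∀ D'', DownClosed m'.pre (m'.q1 ∩ m.cC) D'' →
            (∀ s ∈ m.dD, PosBool.Sat (D'' ∪ (m'.q1 \ m.cC)) (M.delta s σ)) → m'.dD ⊆ D'')) ∧
        (m.cC ⊆ M.AccPart →
          RuleR2 M m.cC σ m.q1 m'.q1 m.pre m'.pre ∧
          DownClosed m'.pre (m'.q2 ∩ m.cC) m'.dD ∧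
          (∀ s ∈ m.dD, PosBool.Sat (m'.dD ∪ (m'.q2 \ m.cC)) (M.dual.delta s σ)) ∧
          (∀ D'', DownClosed m'.pre (m'.q2 ∩ m.cC) D'' →
            (∀ s ∈ m.dD, PosBool.Sat (D'' ∪ (m'.q2 \ m.cC)) (M.dual.delta s σ)) → m'.dD ⊆ D'')))}
  acc := {m | UWF M m ∧ m.dD = ∅}

/-- `tpo n`: the number of total preorders on an `n`-element set. -/
noncomputable def tpo (n : ℕ) : ℕ :=
  Nat.card {r : Fin n → Fin n → Prop // Reflexive r ∧ Transitive r ∧ ∀ a b, r a b ∨ r b a}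

/-! ### Formulas, components and preorders -/

theorem PosBool.Sat.mono {Q : Type*} {X Y : Set Q} (h : X ⊆ Y) :
    ∀ θ : PosBool Q, PosBool.Sat X θ → PosBool.Sat Y θ
  | .tt, _ => trivial
  | .ff, hx => hx
  | .var _, hx => h hx
  | .band θ₁ θ₂, hx => ⟨PosBool.Sat.mono h θ₁ hx.1, PosBool.Sat.mono h θ₂ hx.2⟩
  | .bor θ₁ θ₂, hx => hx.imp (PosBool.Sat.mono h θ₁) (PosBool.Sat.mono h θ₂)

theorem ABA.sccOf_eq_of_mem {α Q : Type*} {M : ABA α Q} {C : Set Q} (hC : M.IsSCC C) {p : Q}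
    (hp : p ∈ C) : M.sccOf p = C := by
  obtain ⟨c, rfl⟩ := hC
  ext x
  exact ⟨fun h => ⟨hp.1.trans h.1, h.2.trans hp.2⟩, fun h => ⟨hp.2.trans h.1, h.2.trans hp.1⟩⟩

theorem StrictOf.trans_le {Q : Type*} {D : Set Q} {le : Q → Q → Prop}
    (h : IsTotalPreorderOn D le) {a b c : Q} (hab : StrictOf le a b) (hbc : le b c) :
    StrictOf le a c :=
  ⟨h.2.2.1 _ _ _ hab.1 hbc, fun hca => hab.2 (h.2.2.1 _ _ _ hbc hca)⟩

/-- In a finite domain, every nonempty subset has a minimal element for a total preorder. -/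
theorem exists_strictOf_minimal {Q : Type*} [Finite Q] {D : Set Q} {le : Q → Q → Prop}
    (h : IsTotalPreorderOn D le) (S : Set Q) (hS : S.Nonempty) :
    ∃ r ∈ S, ∀ s ∈ S, ¬ StrictOf le s r := by
  have : IsTrans Q (StrictOf le) := ⟨fun _ _ _ hab hbc => hab.trans_le h hbc.1⟩
  have : Std.Irrefl (StrictOf le) := ⟨fun _ ha => ha.2 ha.1⟩
  exact (Finite.wellFounded_of_trans_of_irrefl (StrictOf le)).has_min S hS

/-! ### Comparing preorders with distances -/

/-- The common core of the rejecting and the accepting case. `D i` is the part of the SCC on which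
distances and preorders live at level `i`, `B i` is the set of states outside the SCC usable at
level `i + 1`, and `θ i p` is the (possibly dualised) transition formula of `p` at level `i`. -/
theorem strict_iff_dist_lt {Q : Type*} [Finite Q] (D B : ℕ → Set Q) (θ : ℕ → Q → PosBool Q)
    (d : ℕ → Q → ℕ) (le : ℕ → Q → Q → Prop)
    (hpos : ∀ i, ∀ q ∈ D i, 0 < d i q)
    (hsat : ∀ i, ∀ p ∈ D i,
      PosBool.Sat (B i ∪ {q | q ∈ D (i + 1) ∧ d (i + 1) q ≤ d i p - 1}) (θ i p))
    (hmin : ∀ i, ∀ p ∈ D i, 1 < d i p →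
      ¬ PosBool.Sat (B i ∪ {q | q ∈ D (i + 1) ∧ d (i + 1) q ≤ d i p - 2}) (θ i p))
    (hle : ∀ i, IsTotalPreorderOn (D i) (le i))
    (hrule : ∀ i, ∀ q ∈ D i, ∀ q' ∈ D i, (StrictOf (le i) q q' ↔ ∃ r ∈ D (i + 1),
      PosBool.Sat ({r' | r' ∈ D (i + 1) ∧ StrictOf (le (i + 1)) r' r} ∪ B i) (θ i q) ∧
      ¬ PosBool.Sat ({r' | r' ∈ D (i + 1) ∧ StrictOf (le (i + 1)) r' r} ∪ B i) (θ i q'))) :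
    ∀ i, ∀ q ∈ D i, ∀ q' ∈ D i, (StrictOf (le i) q q' ↔ d i q < d i q') := by
  have key : ∀ n i, ∀ q ∈ D i, ∀ q' ∈ D i, min (d i q) (d i q') = n →
      (StrictOf (le i) q q' ↔ d i q < d i q') := by
    intro n
    induction n using Nat.strong_induction_on with
    | _ n ih =>
    intro i q hq q' hq' hn
    constructor
    · intro hlt
      by_contra hcon
      have hn' : d i q' = n := by omega
      obtain ⟨r, hr, hs, hns⟩ := (hrule i q hq q' hq').1 hlt
      -- Otherwise the states of distance `≤ n - 1` would all lie below `r`, although they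
      -- satisfy the formula of `q'`.
      have hex : ∃ s ∈ D (i + 1), d (i + 1) s ≤ n - 1 ∧ ¬ StrictOf (le (i + 1)) s r := by
        by_contra! hall
        refine hns (PosBool.Sat.mono ?_ _ (hsat i q' hq'))
        rintro x (hx | ⟨hx, hdx⟩)
        · exact Or.inr hx
        · exact Or.inl ⟨hx, hall x hx (by omega)⟩
      obtain ⟨s, hsD, hds, hsr⟩ := hex
      have hrs : le (i + 1) r s := by
        rcases (hle (i + 1)).2.2.2 r hr s hsD with h | h
        · exact h
        · by_contra h'
          exact hsr ⟨h, h'⟩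
      have hspos := hpos _ s hsD
      -- Everything below `r` is strictly below `s`, hence of distance `≤ n - 2`, which
      -- contradicts the minimality of `d i q ≥ n`.
      refine hmin i q hq (by omega) (PosBool.Sat.mono ?_ _ hs)
      rintro x (⟨hx, hxr⟩ | hx)
      · refine Or.inr ⟨hx, ?_⟩
        have := (ih _ (by omega) (i + 1) x hx s hsD rfl).1 (hxr.trans_le (hle _) hrs)
        omega
      · exact Or.inl hx
    · intro hlt
      have hn' : d i q = n := by omega
      have hqpos := hpos i q hq
      have hnot : ¬ PosBool.Sat (B i ∪ {x | x ∈ D (i + 1) ∧ d (i + 1) x ≤ n - 1}) (θ i q') := by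
        intro h
        refine hmin i q' hq' (by omega) (PosBool.Sat.mono ?_ _ h)
        rintro x (hx | ⟨hx, hdx⟩)
        · exact Or.inl hx
        · exact Or.inr ⟨hx, by omega⟩
      -- The formula of `q'` is satisfied by allowing larger distances, so these occur.
      have hne : {x | x ∈ D (i + 1) ∧ n ≤ d (i + 1) x}.Nonempty := by
        by_contra hemp
        refine hnot (PosBool.Sat.mono ?_ _ (hsat i q' hq'))
        rintro x (hx | ⟨hx, hdx⟩)
        · exact Or.inl hx
        · refine Or.inr ⟨hx, ?_⟩
          by_contra hc
          exact hemp ⟨x, hx, by omega⟩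
      obtain ⟨r, ⟨hr, hdr⟩, hrmin⟩ := exists_strictOf_minimal (hle (i + 1)) _ hne
      have hset : {r' | r' ∈ D (i + 1) ∧ StrictOf (le (i + 1)) r' r} =
          {x | x ∈ D (i + 1) ∧ d (i + 1) x ≤ n - 1} := by
        ext x
        constructor
        · rintro ⟨hx, hxr⟩
          refine ⟨hx, ?_⟩
          by_contra hc
          exact hrmin x ⟨hx, by omega⟩ hxr
        · rintro ⟨hx, hdx⟩
          exact ⟨hx, (ih _ (by omega) (i + 1) x hx r hr rfl).2 (by omega)⟩
      refine (hrule i q hq q' hq').2 ⟨r, hr, ?_, ?_⟩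
      · rw [hset, Set.union_comm, ← hn']
        exact hsat i q hq
      · rwa [hset, Set.union_comm]
  exact fun i q hq q' hq' => key _ i q hq q' hq' rfl

/-- If `≺` coincides with `d q < d q'`, then `⪯` entails `≤` on distances. -/
theorem compatible_of_strict_iff {Q : Type*} {le : Q → Q → Prop} {d : Q → ℕ} {q q' : Q}
    (h : StrictOf le q q' ↔ d q < d q') (h' : StrictOf le q' q ↔ d q' < d q) :
    (le q q' → d q ≤ d q') ∧ (StrictOf le q q' → d q < d q') :=
  ⟨fun hle => not_lt.1 fun hlt => (h'.2 hlt).2 hle, h.1⟩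

/-- any consistent sequence of total preorders for `R_w` is compatible
with the unique consistent sequence of distance functions. -/
theorem preorder_vs_distance {α Q : Type} [Fintype α] [Fintype Q] (M : ABA α Q)
    (hweak : M.IsWeak) (hcomp : M.Complete) (w : ℕ → α) (d : ℕ → Q → ℕ)
    (hdpos : ∀ i : ℕ, ∀ q ∈ DistDom M (QSeq M w) i, 0 < d i q)
    (hd : ConsistentDist M w (QSeq M w) d)
    (hduniq : ∀ d' : ℕ → Q → ℕ,
      ((∀ i : ℕ, ∀ q ∈ DistDom M (QSeq M w) i, 0 < d' i q) ∧
        ConsistentDist M w (QSeq M w) d') →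
      ∀ i : ℕ, ∀ q ∈ DistDom M (QSeq M w) i, d i q = d' i q)
    (pre : ℕ → Set Q → Q → Q → Prop) (hpre : ConsistentPre M w (QSeq M w) pre) :
    ∀ (i : ℕ) (C : Set Q), M.IsSCC C →
      (C ⊆ M.RejPart → ∀ q ∈ C ∩ QSeq M w i, ∀ q' ∈ C ∩ QSeq M w i,
        (pre i C q q' → d i q ≤ d i q') ∧ (StrictOf (pre i C) q q' → d i q < d i q')) ∧
      (C ⊆ M.AccPart → ∀ q ∈ C \ QSeq M w i, ∀ q' ∈ C \ QSeq M w i,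
        (pre i C q q' → d i q ≤ d i q') ∧ (StrictOf (pre i C) q q' → d i q < d i q')) := by
  intro i C hC
  constructor
  · intro hCR q hq q' hq'
    have key := strict_iff_dist_lt (fun i => C ∩ QSeq M w i) (fun i => QSeq M w (i + 1) \ C)
      (fun i p => M.delta p (w i)) d (fun i => pre i C)
      (fun i p hp => hdpos i p (Or.inl ⟨hp.2, hCR hp.1⟩))
      (fun i p hp => by
        have h := ((hd i).1 p ⟨hCR hp.1, hp.2⟩).1
        rwa [ABA.sccOf_eq_of_mem hC hp.1] at h)
      (fun i p hp => by
        have h := ((hd i).1 p ⟨hCR hp.1, hp.2⟩).2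
        rwa [ABA.sccOf_eq_of_mem hC hp.1] at h)
      (fun i => ((hpre i C hC).1 hCR).1) (fun i => ((hpre i C hC).1 hCR).2) i
    exact compatible_of_strict_iff (key q hq q' hq') (key q' hq' q hq)
  · intro hCA q hq q' hq'
    have key := strict_iff_dist_lt (fun i => C \ QSeq M w i) (fun i => (QSeq M w (i + 1) ∪ C)ᶜ)
      (fun i p => M.dual.delta p (w i)) d (fun i => pre i C)
      (fun i p hp => hdpos i p (Or.inr ⟨hCA hp.1, hp.2⟩))
      (fun i p hp => by
        have h := ((hd i).2 p ⟨hCA hp.1, hp.2⟩).1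
        rwa [ABA.sccOf_eq_of_mem hC hp.1] at h)
      (fun i p hp => by
        have h := ((hd i).2 p ⟨hCA hp.1, hp.2⟩).2
        rwa [ABA.sccOf_eq_of_mem hC hp.1] at h)
      (fun i => ((hpre i C hC).2 hCA).1) (fun i => ((hpre i C hC).2 hCA).2) i
    exact compatible_of_strict_iff (key q hq q' hq') (key q' hq' q hq)
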